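/- Let n be a positive integer. Then the greatest common divisor of the set { C(n,k) : 1 ≤ k ≤ n, gcd(k,n) = 1 } of binomial coefficients equals n. -/

import Mathlib

theorem self_dvd_mul_choose : ∀ n k : ℕ, n ∣ k * n.choose k
  | _, 0 => by simp
  | 0, _ + 1 => by simp
  | n + 1, k + 1 => Dvd.intro (n.choose k) <| calc
      (n + 1) * n.choose k = (n + 1).choose (k + 1) * (k + 1) := Nat.add_one_mul_choose_eq n k
      _ = (k + 1) * (n + 1).choose (k + 1) := mul_comm _ _

theorem self_dvd_choose_of_coprime {n k : ℕ} (h : k.Coprime n) : n ∣ n.choose k :=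
  h.symm.dvd_of_dvd_mul_left (self_dvd_mul_choose n k)

/-- The gcd of the binomial coefficients C(n,k) over 1 ≤ k ≤ n with
gcd(k,n) = 1 equals n. -/
theorem gcd_binomials_coprime_eq (n : ℕ) (hn : 0 < n) :
    Finset.gcd ((Finset.Icc 1 n).filter fun k => Nat.gcd k n = 1)
      (fun k => Nat.choose n k) = n := by
  have one_mem : 1 ∈ (Finset.Icc 1 n).filter fun k => Nat.gcd k n = 1 :=
    Finset.mem_filter.mpr ⟨Finset.left_mem_Icc.mpr hn, Nat.gcd_one_left n⟩
  apply Nat.dvd_antisymm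
  · simpa only [Nat.choose_one_right] using Finset.gcd_dvd (f := n.choose) one_mem
  · exact Finset.dvd_gcd fun k hk => self_dvd_choose_of_coprime (Finset.mem_filter.mp hk).2
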